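/- arXiv:2403.05865 — 2 statements merged into one kernel-verified Lean document; each statement's English description precedes it below -/
import Mathlib

section
/- Let ħ > 0, P ∈ ℝⁿ, let a > 0 be smooth and ℤⁿ-periodic, z smooth and ℤⁿ-periodic, u(x) = P·x + z(x), W smooth ℤⁿ-periodic, E ∈ ℝ. Assume div(a²Du) = 0 and (ħ²/2)Δa = a(|Du|²/2 + W − E) on ℝⁿ. Then the complex-valued function ψ : ℝⁿ → ℂ defined by ψ(x) = a(x)·exp(i u(x)/ħ) satisfies the stationary Schrödinger equation −(ħ²/2)Δψ + Wψ = Eψ on ℝⁿ. -/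
/-!
Writing `ψ = a e^{iu/ħ}`, the product rule applied twice gives
`Δψ = (Δa - a |Du|² / ħ² + (i/ħ)(2 Da·Du + a Δu)) e^{iu/ħ}` (`lapC_amplitude_mul_phase`).
The transport equation reads `a (2 Da·Du + a Δu) = 0`, so the imaginary part of the amplitude
vanishes because `a > 0`; the real part turns the Schrödinger equation into the Hamilton-Jacobi
equation with quantum potential, multiplied by the phase.
-/

open MeasureTheory

noncomputable section

/-- `ℝⁿ` with the Euclidean inner product. -/
abbrev En (n : ℕ) := EuclideanSpace ℝ (Fin n)

/-- The integer vector `k` viewed as a point of `ℝⁿ`. -/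
def intVec {n : ℕ} (k : Fin n → ℤ) : En n :=
  (EuclideanSpace.equiv (Fin n) ℝ).symm (fun i => (k i : ℝ))

/-- `ℤⁿ`-periodicity for scalar functions on `ℝⁿ`. -/
def IsPeriodic {n : ℕ} (f : En n → ℝ) : Prop :=
  ∀ (x : En n) (k : Fin n → ℤ), f (x + intVec k) = f x

/-- `ℤⁿ`-periodicity for vector fields on `ℝⁿ`. -/
def IsPeriodicV {n : ℕ} (F : En n → En n) : Prop :=
  ∀ (x : En n) (k : Fin n → ℤ), F (x + intVec k) = F x

/-- The unit cube `[0,1]ⁿ`, the fundamental domain of the torus. -/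
def unitCube (n : ℕ) : Set (En n) := {x | ∀ i, x i ∈ Set.Icc (0:ℝ) 1}

/-- Euclidean dot product. -/
def dot {n : ℕ} (x y : En n) : ℝ := ∑ i, x i * y i

/-- Partial derivative in the `i`-th coordinate direction. -/
def pd {n : ℕ} (i : Fin n) (f : En n → ℝ) (x : En n) : ℝ :=
  fderiv ℝ f x (EuclideanSpace.single i 1)

/-- The Laplacian of a scalar function. -/
def lap {n : ℕ} (f : En n → ℝ) (x : En n) : ℝ :=
  ∑ i, pd i (fun y => pd i f y) x

/-- The divergence of a vector field. -/
def dvg {n : ℕ} (F : En n → En n) (x : En n) : ℝ :=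
  ∑ i, fderiv ℝ (fun y => F y i) x (EuclideanSpace.single i 1)

/-- Partial derivative of a complex-valued function in the `i`-th direction. -/
def pdC {n : ℕ} (i : Fin n) (f : En n → ℂ) (x : En n) : ℂ :=
  fderiv ℝ f x (EuclideanSpace.single i 1)

/-- The (componentwise) Laplacian of a complex-valued function. -/
def lapC {n : ℕ} (f : En n → ℂ) (x : En n) : ℂ :=
  ∑ i, pdC i (fun y => pdC i f y) x

/-- Product rule for `f e^{iu/ħ}`, where `f` has real part `b` and imaginary part `c`. -/
lemma pdC_amplitude_mul_phase {n : ℕ} (i : Fin n) (hbar : ℝ) {b c u : En n → ℝ} {x : En n}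
    (hb : DifferentiableAt ℝ b x) (hc : DifferentiableAt ℝ c x) (hu : DifferentiableAt ℝ u x) :
    pdC i (fun y => ((b y : ℂ) + Complex.I * (c y : ℂ))
        * Complex.exp (Complex.I * u y / hbar)) x
      = (((pd i b x - c x * pd i u x / hbar : ℝ) : ℂ)
          + Complex.I * ((pd i c x + b x * pd i u x / hbar : ℝ) : ℂ))
        * Complex.exp (Complex.I * u x / hbar) := by
  have ofReal {f : En n → ℝ} (hf : DifferentiableAt ℝ f x) :
      HasFDerivAt (fun y => (f y : ℂ)) (Complex.ofRealCLM.comp (fderiv ℝ f x)) x :=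
    Complex.ofRealCLM.hasFDerivAt.comp x hf.hasFDerivAt
  have hphase := (((ofReal hu).const_mul Complex.I).mul_const ((hbar : ℂ)⁻¹)).cexp
  have h := ((ofReal hb).add ((ofReal hc).const_mul Complex.I)).mul hphase
  simp only [← div_eq_mul_inv] at h
  unfold pdC pd
  erw [h.fderiv]
  simp
  ring_nf
  simp only [Complex.I_sq]
  ring

lemma gradient_apply_eq_pd {n : ℕ} (u : En n → ℝ) (x : En n) (i : Fin n) :
    gradient u x i = pd i u x := by
  have h := InnerProductSpace.toDual_symm_apply (𝕜 := ℝ)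
    (x := (EuclideanSpace.single i 1 : En n)) (y := fderiv ℝ u x)
  unfold pd gradient
  rw [← h, EuclideanSpace.inner_single_right]
  simp

lemma contDiff_pd {n : ℕ} {f : En n → ℝ} (hf : ContDiff ℝ (⊤ : ℕ∞) f) (i : Fin n) :
    ContDiff ℝ (⊤ : ℕ∞) (fun y => pd i f y) := by
  unfold pd
  exact (hf.fderiv_right (m := (⊤ : ℕ∞)) (by simp)).clm_apply contDiff_const

/-- The Laplacian of `a e^{iu/ħ}`: its amplitude has real part `Δa - a |Du|² / ħ²` and
imaginary part `(2 Da·Du + a Δu) / ħ`, the latter being `div(a² Du) / (ħ a)` where `a ≠ 0`. -/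
lemma lapC_amplitude_mul_phase {n : ℕ} (hbar : ℝ) {a u : En n → ℝ}
    (ha : ContDiff ℝ (⊤ : ℕ∞) a) (hu : ContDiff ℝ (⊤ : ℕ∞) u) (x : En n) :
    lapC (fun y => (a y : ℂ) * Complex.exp (Complex.I * u y / hbar)) x
      = (((lap a x - a x * (∑ i, pd i u x ^ 2) / hbar ^ 2 : ℝ) : ℂ)
          + Complex.I *
            (((∑ i, (2 * pd i a x * pd i u x + a x * pd i (fun y => pd i u y) x)) / hbar : ℝ) : ℂ))
        * Complex.exp (Complex.I * u x / hbar) := by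
  have da := ha.differentiable (by simp)
  have du := hu.differentiable (by simp)
  have first (i : Fin n) (y : En n) :
      pdC i (fun y => (a y : ℂ) * Complex.exp (Complex.I * u y / hbar)) y
        = ((pd i a y : ℂ) + Complex.I * ((a y * pd i u y / hbar : ℝ) : ℂ))
          * Complex.exp (Complex.I * u y / hbar) := by
    have h := pdC_amplitude_mul_phase (c := fun _ => 0) i hbar (da y)
      (differentiableAt_const 0) (du y)
    simpa [pd] using h
  have dai (i : Fin n) := (contDiff_pd ha i).differentiable (by simp)
  have dui (i : Fin n) := (contDiff_pd hu i).differentiable (by simp)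
  have second (i : Fin n) :
      pd i (fun y => a y * pd i u y / hbar) x
        = (pd i a x * pd i u x + a x * pd i (fun y => pd i u y) x) / hbar := by
    have h := ((da x).hasFDerivAt.mul (dui i x).hasFDerivAt).mul_const hbar⁻¹
    simp only [← div_eq_mul_inv] at h
    conv_lhs => unfold pd
    erw [h.fderiv]
    simp [pd]
    ring
  unfold lapC
  simp only [first]
  have step (i : Fin n) := pdC_amplitude_mul_phase
    (c := fun y => a y * pd i u y / hbar) i hbar (dai i x)
    (by simpa only [div_eq_mul_inv] using ((da x).fun_mul (dui i x)).mul_const hbar⁻¹) (du x)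
  simp only [step, second]
  rw [← Finset.sum_mul, Finset.sum_add_distrib, ← Finset.mul_sum, ← Complex.ofReal_sum,
    ← Complex.ofReal_sum]
  congr 4
  · rw [lap, Finset.mul_sum, Finset.sum_div, ← Finset.sum_sub_distrib]
    exact Finset.sum_congr rfl fun i _ => by ring
  · rw [Finset.sum_div]
    exact Finset.sum_congr rfl fun i _ => by ring

/-- Theorem 2.2: if `a, u` satisfy the transport equation and
the Hamilton-Jacobi equation with quantum potential, then `ψ = a e^{iu/hbar}` is an
eigenfunction of the Hamiltonian operator. -/
theorem eigenfunction_of_hamiltonian {n : ℕ} (hbar : ℝ) (h_hbar : 0 < hbar) (P : En n)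
    (a z W : En n → ℝ) (E : ℝ)
    (ha : ContDiff ℝ (⊤ : ℕ∞) a) (haper : IsPeriodic a) (hapos : ∀ x, 0 < a x)
    (hz : ContDiff ℝ (⊤ : ℕ∞) z) (hzper : IsPeriodic z)
    (hW : ContDiff ℝ (⊤ : ℕ∞) W) (hWper : IsPeriodic W)
    (u : En n → ℝ) (hu : u = fun x => dot P x + z x)
    (htransport : ∀ x, dvg (fun y => (a y) ^ 2 • gradient u y) x = 0)
    (heig : ∀ x, hbar ^ 2 / 2 * lap a x
      = a x * (dot (gradient u x) (gradient u x) / 2 + W x - E))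
    (ψ : En n → ℂ) (hψ : ψ = fun x => (a x : ℂ) * Complex.exp (Complex.I * u x / hbar)) :
    ∀ x, -(hbar ^ 2 / 2 : ℂ) * lapC ψ x + (W x : ℂ) * ψ x = (E : ℂ) * ψ x := by
  intro x
  have su : ContDiff ℝ (⊤ : ℕ∞) u := by
    rw [hu]
    unfold dot
    fun_prop
  have hsum : ∑ i, (2 * pd i a x * pd i u x + a x * pd i (fun y => pd i u y) x) = 0 := by
    have ht := htransport x
    have h (i : Fin n) : fderiv ℝ (fun y => ((a y) ^ 2 • gradient u y) i) x
        (EuclideanSpace.single i 1)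
        = a x * (2 * pd i a x * pd i u x + a x * pd i (fun y => pd i u y) x) := by
      have dui := (contDiff_pd su i).differentiable (by simp)
      have da := ha.differentiable (by simp)
      have hd := ((da x).hasFDerivAt.pow 2).mul (dui x).hasFDerivAt
      simp only [PiLp.smul_apply, gradient_apply_eq_pd, smul_eq_mul]
      erw [hd.fderiv]
      simp [pd]
      ring
    unfold dvg at ht
    simp only [h] at ht
    rw [← Finset.mul_sum] at ht
    exact (mul_eq_zero.mp ht).resolve_left (hapos x).ne'
  have hHJ := heig x
  have hdot : dot (gradient u x) (gradient u x) = ∑ i, pd i u x ^ 2 := by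
    simp only [dot, gradient_apply_eq_pd, sq]
  rw [hdot] at hHJ
  have hreal : -(hbar ^ 2 / 2) * (lap a x - a x * (∑ i, pd i u x ^ 2) / hbar ^ 2) + W x * a x
      = E * a x := by
    field_simp
    linarith
  have hcomplex := congrArg (fun r : ℝ => (r : ℂ)) hreal
  push_cast at hcomplex
  rw [hψ, lapC_amplitude_mul_phase hbar ha su, hsum]
  push_cast
  linear_combination Complex.exp (Complex.I * u x / hbar) * hcomplex
end
end

section
/- Let ħ > 0, P ∈ ℝⁿ, W smooth ℤⁿ-periodic, H̄ ∈ ℝ, and let v, v* : ℝⁿ → ℝ be smooth ℤⁿ-periodic functions satisfying −(ħ/2)Δv + (1/2)|P + Dv|² − W = H̄ and (ħ/2)Δv* + (1/2)|P + Dv*|² − W = H̄ on ℝⁿ. Set σ = e^{(v* − v)/ħ}, assume ∫ σ dx = 1, and set u(x) = P·x + (v(x) + v*(x))/2. Then ∫ ( (1/2)|Du|² − W ) σ dx = H̄ + (1/8) ∫ |Dv − Dv*|² σ dx. -/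
/-!
Averaging the two equations and using the parallelogram law
`|P + (a + b) / 2|² = (|P + a|² + |P + b|²) / 2 - |a - b|² / 4` with `a = Dv`, `b = Dv*` gives
`|Du|² / 2 - W = H̄ + (ħ / 4) Δ(v - v*) - |Dv - Dv*|² / 8` pointwise.
Since `Dσ = -σ D(v - v*) / ħ`, one has
`div (σ D(v - v*)) = σ Δ(v - v*) - σ |Dv - Dv*|² / ħ`, so after multiplication by `σ` the
right-hand side is `H̄ σ + |Dv - Dv*|² σ / 8 + (ħ / 4) div (σ D(v - v*))`.
The divergence of a periodic field integrates to zero over the unit cube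
(`integral_div_periodic`), and `∫ σ = 1`.
-/

open MeasureTheory

noncomputable section

lemma gradient_coord {n : ℕ} (f : En n → ℝ) (x : En n) (i : Fin n) :
    gradient f x i = pd i f x := by
  have h : inner ℝ (gradient f x) (EuclideanSpace.single i (1 : ℝ))
      = fderiv ℝ f x (EuclideanSpace.single i 1) := by
    unfold gradient
    exact InnerProductSpace.toDual_symm_apply
  rw [pd, ← h, EuclideanSpace.inner_single_right]
  simp

lemma pd_smooth {n : ℕ} {f : En n → ℝ} (hf : ContDiff ℝ (⊤ : ℕ∞) f) (i : Fin n) :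
    ContDiff ℝ (⊤ : ℕ∞) (pd i f) := by
  have h : ContDiff ℝ (⊤ : ℕ∞) (fderiv ℝ f) := hf.fderiv_right (by simp)
  exact h.clm_apply contDiff_const

lemma pd_periodic {n : ℕ} {f : En n → ℝ} (hf : IsPeriodic f) (i : Fin n) :
    IsPeriodic (pd i f) := by
  intro x k
  unfold pd
  rw [← fderiv_comp_add_right (f := f) (intVec k)]
  congr 2
  funext y
  exact hf y k

lemma isCompact_unitCube (n : ℕ) : IsCompact (unitCube n) := by
  have h : unitCube n = (EuclideanSpace.equiv (Fin n) ℝ).symm ''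
      Set.pi Set.univ fun _ => Set.Icc (0:ℝ) 1 := by
    rw [(EuclideanSpace.equiv (Fin n) ℝ).image_symm_eq_preimage]
    ext x
    simp [unitCube, Pi.le_def, forall_and]
  rw [h]
  exact (isCompact_univ_pi fun _ => isCompact_Icc).image (ContinuousLinearEquiv.continuous _)

lemma integrableOn_unitCube {n : ℕ} {f : En n → ℝ} (hf : Continuous f) :
    IntegrableOn f (unitCube n) :=
  hf.continuousOn.integrableOn_compact (isCompact_unitCube n)

/-- Divergence theorem on the torus: the fluxes through opposite faces of the cube cancel. -/
lemma integral_div_periodic {n : ℕ} (F : Fin n → En n → ℝ)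
    (hF : ∀ i, ContDiff ℝ (⊤ : ℕ∞) (F i)) (hper : ∀ i, IsPeriodic (F i)) :
    ∫ x in unitCube n, ∑ i, pd i (F i) x = 0 := by
  cases n with
  | zero => simp
  | succ n =>
    -- The box divergence theorem lives on `Fin (n + 1) → ℝ`; `e` transports it, preserving volume.
    let e := (EuclideanSpace.equiv (Fin (n + 1)) ℝ).symm
    have hpre : e ⁻¹' unitCube (n + 1) = Set.Icc (0 : Fin (n + 1) → ℝ) 1 := by
      ext x
      simp [e, unitCube, Pi.le_def, forall_and]
    have hmp : MeasurePreserving e volume volume :=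
      PiLp.volume_preserving_toLp (Fin (n + 1))
    have hemb : MeasurableEmbedding e := e.toHomeomorph.measurableEmbedding
    rw [← hmp.setIntegral_preimage_emb hemb, hpre]
    have hder : ∀ i x, HasFDerivAt (fun y => F i (e y))
        ((fderiv ℝ (F i) (e x)).comp (e : (Fin (n + 1) → ℝ) →L[ℝ] En (n + 1))) x := by
      intro i x
      exact (((hF i).differentiable (by simp)) (e x)).hasFDerivAt.comp x e.hasFDerivAt
    have hcont : Continuous fun x => ∑ i, pd i (F i) (e x) :=
      continuous_finsetSum _ fun i _ => (pd_smooth (hF i) i).continuous.comp e.continuous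
    have key := integral_divergence_of_hasFDerivAt_off_countable' (0 : Fin (n + 1) → ℝ) 1
      zero_le_one (fun i y => F i (e y))
      (fun i x => (fderiv ℝ (F i) (e x)).comp (e : (Fin (n + 1) → ℝ) →L[ℝ] En (n + 1)))
      ∅ Set.countable_empty
      (fun i => ((hF i).continuous.comp e.continuous).continuousOn)
      (fun x _ i => hder i x)
      (hcont.continuousOn.integrableOn_compact isCompact_Icc)
    refine key.trans (Finset.sum_eq_zero fun i _ => sub_eq_zero.2 ?_)
    refine integral_congr_ae (Filter.Eventually.of_forall fun x => ?_)
    -- The front and back faces orthogonal to direction `i` differ by the `i`-th lattice vector.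
    have hsh : e (i.insertNth 1 x) = e (i.insertNth 0 x) + intVec (Pi.single i 1) := by
      ext j
      refine Fin.succAboveCases i ?_ (fun j => ?_) j
      · simp [e, intVec]
      · simp [e, intVec]
    change F i (e (i.insertNth 1 x)) = F i (e (i.insertNth 0 x))
    rw [hsh, hper]

/-- Theorem 5.2, identity (5.8). -/
theorem integral_eikonal_identity {n : ℕ} (hbar : ℝ) (h_hbar : 0 < hbar) (P : En n)
    (W : En n → ℝ) (hW : ContDiff ℝ (⊤ : ℕ∞) W) (hWper : IsPeriodic W) (Hbar : ℝ)
    (v vstar : En n → ℝ)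
    (hv : ContDiff ℝ (⊤ : ℕ∞) v) (hvper : IsPeriodic v)
    (hvstar : ContDiff ℝ (⊤ : ℕ∞) vstar) (hvstarper : IsPeriodic vstar)
    (heqv : ∀ x, -(hbar / 2) * lap v x
        + 1 / 2 * dot (P + gradient v x) (P + gradient v x) - W x = Hbar)
    (heqvstar : ∀ x, hbar / 2 * lap vstar x
        + 1 / 2 * dot (P + gradient vstar x) (P + gradient vstar x) - W x = Hbar)
    (σ : En n → ℝ) (hσ : σ = fun x => Real.exp ((vstar x - v x) / hbar))
    (hσnorm : (∫ x in unitCube n, σ x) = 1)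
    (u : En n → ℝ) (hu : u = fun x => dot P x + (v x + vstar x) / 2) :
    (∫ x in unitCube n,
        (1 / 2 * dot (gradient u x) (gradient u x) - W x) * σ x)
      = Hbar + 1 / 8 * ∫ x in unitCube n,
          dot (gradient v x - gradient vstar x)
              (gradient v x - gradient vstar x) * σ x := by
  have hdv := hv.differentiable (by simp)
  have hds := hvstar.differentiable (by simp)
  have hσs : ContDiff ℝ (⊤ : ℕ∞) σ := by
    rw [hσ]; exact ((hvstar.sub hv).div_const _).exp
  have hσper : IsPeriodic σ := by
    intro x k
    simp only [hσ, hvper x k, hvstarper x k]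
  have hpdσ : ∀ i x, pd i σ x = (pd i vstar x - pd i v x) / hbar * σ x := by
    intro i x
    have h := (((hds x).hasFDerivAt.sub (hdv x).hasFDerivAt).mul_const hbar⁻¹).exp
    have hσ' : σ = fun x => Real.exp ((vstar x - v x) * hbar⁻¹) := by
      simpa only [div_eq_mul_inv] using hσ
    have h' := h.congr_of_eventuallyEq (f₁ := σ) (Filter.Eventually.of_forall (congrFun hσ'))
    simp only [pd, h'.fderiv]
    rw [congrFun hσ' x]
    simp
    ring
  have hpdu : ∀ i x, pd i u x = P i + (pd i v x + pd i vstar x) / 2 := by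
    intro i x
    have hP : HasFDerivAt (fun y : En n => dot P y) (innerSL ℝ P) x := by
      have : (fun y : En n => dot P y) = innerSL ℝ P := by
        funext y
        simp [dot, PiLp.inner_apply, mul_comm]
      rw [this]
      exact (innerSL ℝ P).hasFDerivAt
    have h := hP.add (((hdv x).hasFDerivAt.add (hds x).hasFDerivAt).mul_const (2⁻¹ : ℝ))
    have hu' : u = fun x => dot P x + (v x + vstar x) * 2⁻¹ := by
      simpa only [div_eq_mul_inv] using hu
    have h' := h.congr_of_eventuallyEq (f₁ := u) (Filter.Eventually.of_forall (congrFun hu'))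
    simp only [pd, h'.fderiv]
    simp [EuclideanSpace.inner_single_right]
    ring
  -- The field `σ D(v - v*)`, whose divergence is the total-derivative part of the integrand.
  let F : Fin n → En n → ℝ := fun i x => (pd i v x - pd i vstar x) * σ x
  have hdiv := integral_div_periodic F
    (fun i => ((pd_smooth hv i).sub (pd_smooth hvstar i)).mul hσs)
    (fun i x k => by
      simp only [F, pd_periodic hvper i x k, pd_periodic hvstarper i x k, hσper x k])
  have hpdF : ∀ i x, pd i (F i) x = (pd i (fun y => pd i v y) x - pd i (fun y => pd i vstar y) x)
      * σ x - 1 / hbar * ((pd i v x - pd i vstar x) * (pd i v x - pd i vstar x) * σ x) := by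
    intro i x
    have h1 := ((pd_smooth hv i).differentiable (by simp) x).hasFDerivAt
    have h2 := ((pd_smooth hvstar i).differentiable (by simp) x).hasFDerivAt
    have h3 := (hσs.differentiable (by simp) x).hasFDerivAt
    have h : HasFDerivAt (F i) _ x := (h1.sub h2).mul h3
    have h4 := hpdσ i x
    rw [pd] at h4
    rw [pd, h.fderiv]
    change (pd i v x - pd i vstar x) * fderiv ℝ σ x (EuclideanSpace.single i 1)
      + σ x * (pd i (pd i v) x - pd i (pd i vstar) x) = _
    rw [h4]
    ring
  -- The integrand on the left is the one on the right, up to a divergence.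
  have hpt : ∀ x, (1 / 2 * dot (gradient u x) (gradient u x) - W x) * σ x
      = Hbar * σ x + 1 / 8 * (dot (gradient v x - gradient vstar x)
              (gradient v x - gradient vstar x) * σ x) + hbar / 4 * ∑ i, pd i (F i) x := by
    intro x
    have e1 := heqv x
    have e2 := heqvstar x
    -- Parallelogram law.
    have e3 : dot (gradient u x) (gradient u x)
        = 1 / 2 * dot (P + gradient v x) (P + gradient v x)
        + 1 / 2 * dot (P + gradient vstar x) (P + gradient vstar x)
        - 1 / 4 * dot (gradient v x - gradient vstar x) (gradient v x - gradient vstar x) := by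
      simp only [dot, Finset.mul_sum, ← Finset.sum_add_distrib, ← Finset.sum_sub_distrib]
      refine Finset.sum_congr rfl fun i _ => ?_
      simp only [PiLp.add_apply, PiLp.sub_apply, gradient_coord, hpdu]
      ring
    have e4 : ∑ i, pd i (F i) x = (lap v x - lap vstar x) * σ x
        - 1 / hbar * (dot (gradient v x - gradient vstar x)
              (gradient v x - gradient vstar x) * σ x) := by
      simp only [hpdF, dot, lap, Finset.mul_sum, Finset.sum_mul, ← Finset.sum_sub_distrib,
        PiLp.sub_apply, gradient_coord]
    rw [e3, e4]
    field_simp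
    linear_combination (64 * σ x) * e1 + (64 * σ x) * e2
  have hdotc : Continuous fun x => dot (gradient v x - gradient vstar x)
      (gradient v x - gradient vstar x) * σ x := by
    simp only [dot, PiLp.sub_apply, gradient_coord]
    have h i := ((pd_smooth hv i).sub (pd_smooth hvstar i)).continuous
    exact (continuous_finsetSum _ fun i _ => (h i).mul (h i)).mul hσs.continuous
  have hFc : Continuous fun x => ∑ i, pd i (F i) x :=
    continuous_finsetSum _ fun i _ => (pd_smooth
      (((pd_smooth hv i).sub (pd_smooth hvstar i)).mul hσs) i).continuous
  have i1 := (integrableOn_unitCube hσs.continuous).const_mul Hbar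
  have i2 := (integrableOn_unitCube hdotc).const_mul (1 / 8)
  have i3 := (integrableOn_unitCube hFc).const_mul (hbar / 4)
  simp only [hpt]
  rw [integral_add (by exact i1.add i2) i3, integral_add i1 i2, integral_const_mul, integral_const_mul,
    integral_const_mul, hdiv, hσnorm]
  ring
end
end
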